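/- Let V and W be finite-dimensional real vector spaces, let T : V → W be a linear map, and for an integer i ≥ 2 let T_i : ∧^i V → W ⊗ ∧^{i−1} V be the unique linear map satisfying T_i(v₁ ∧ ⋯ ∧ v_i) = Σ_{j=1}^{i} (−1)^{j−1} T(v_j) ⊗ (v₁ ∧ ⋯ ∧ v̂_j ∧ ⋯ ∧ v_i) for all v₁, …, v_i ∈ V (where v̂_j means v_j is omitted). Then the kernel of T_i equals the image of the canonical map ∧^i(ker T) → ∧^i V induced by the inclusion ker T ↪ V; consequently the rank of T_i equals binom(dim V, i) − binom(dim ker T, i). -/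

import Mathlib

open TensorProduct

/-- The `n`-th exterior power `⋀[ℝ]^n V` of a real vector space `V`, viewed as a submodule
of the exterior algebra of `V`. -/
noncomputable def extPow (n : ℕ) (V : Type*) [AddCommGroup V] [Module ℝ V] :
    Submodule ℝ (ExteriorAlgebra ℝ V) := ⋀[ℝ]^n V

/-- The wedge `v₁ ∧ ⋯ ∧ vₙ` of a family `v : Fin n → V` lies in the `n`-th exterior power. -/
theorem ιMulti_mem_extPow {V : Type*} [AddCommGroup V] [Module ℝ V] (n : ℕ)
    (v : Fin n → V) : ExteriorAlgebra.ιMulti ℝ n v ∈ extPow n V :=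
  ExteriorAlgebra.ιMulti_range ℝ n (Set.mem_range_self v)

/-!
Applying a functional `ψ` on `W` to the first factor turns `T_i x` into the contraction `(ψ ∘ T)⌋x`,
so `T_i x = 0` makes every functional that vanishes on `ker T` contract `x` to zero. Let `U` be a
finite-dimensional subspace with `x ∈ ⋀^i U`, of minimal dimension; inside the exterior algebra of
`V`, the image of `⋀^i U` is the power `(U.map ι) ^ i`. If some `u ∈ U` were not in `ker T`, there
would be such a functional `φ` with `φ u = 1`, and the projection `P v = v - φ(v) u` would satisfy
`⋀P x = x - u ∧ (φ⌋x) = x`, so that `x` would already come from `P U ⊆ U ∩ ker φ`, which is strictly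
smaller than `U`. Hence `U ⊆ ker T`. The formula for `⋀P` holds without dividing by degrees, so the
argument works over a field of any characteristic.
-/

section ContractLeft

open ExteriorAlgebra Module

local notation:70 φ:70 "⌋" x:71 => CliffordAlgebra.contractLeft (Q := 0) φ x

theorem exists_fg_mem_map_pow {R M A : Type*} [CommSemiring R] [AddCommMonoid M] [Module R M]
    [Semiring A] [Algebra R A] (f : M →ₗ[R] A) {n : ℕ} {x : A} (hx : x ∈ LinearMap.range f ^ n) :
    ∃ U : Submodule R M, U.FG ∧ x ∈ U.map f ^ n := by
  induction hx using Submodule.pow_induction_on_left' with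
  | algebraMap r => exact ⟨⊥, Submodule.fg_bot, by simp⟩
  | add x y n _ _ hx hy =>
    obtain ⟨U, hU, hxU⟩ := hx
    obtain ⟨U', hU', hyU'⟩ := hy
    have mono {P : Submodule R M} (hP : P ≤ U ⊔ U') : P.map f ^ n ≤ (U ⊔ U').map f ^ n :=
      pow_le_pow_left' (Submodule.map_mono hP) n
    exact ⟨U ⊔ U', hU.sup hU', add_mem (mono le_sup_left hxU) (mono le_sup_right hyU')⟩
  | mem_mul a ha n x _ hx =>
    obtain ⟨v, rfl⟩ := ha
    obtain ⟨U, hU, hxU⟩ := hx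
    have hv : v ∈ R ∙ v ⊔ U := Submodule.mem_sup_left (Submodule.mem_span_singleton_self v)
    refine ⟨R ∙ v ⊔ U, (Submodule.fg_span_singleton v).sup hU, ?_⟩
    rw [pow_succ']
    exact Submodule.mul_mem_mul (Submodule.mem_map_of_mem hv)
      (pow_le_pow_left' (Submodule.map_mono le_sup_right) n hxU)

section CommRing

variable {R M N : Type*} [CommRing R] [AddCommGroup M] [Module R M] [AddCommGroup N] [Module R N]

theorem map_map_ι_pow (f : M →ₗ[R] N) (U : Submodule R M) (n : ℕ) :
    (U.map (ι R) ^ n).map (map f).toLinearMap = (U.map f).map (ι R) ^ n := by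
  rw [Submodule.map_pow, ← Submodule.map_comp, map_comp_ι, Submodule.map_comp]

theorem map_exteriorPower (f : M →ₗ[R] N) (n : ℕ) :
    (⋀[R]^n M).map (map f).toLinearMap = (LinearMap.range f).map (ι R) ^ n := by
  rw [exteriorPower, LinearMap.range_eq_map, map_map_ι_pow, LinearMap.range_eq_map]

theorem map_id_sub_smulRight_apply (φ : Dual R M) (u : M) (x : ExteriorAlgebra R M) :
    map (LinearMap.id - φ.smulRight u) x = x - ι R u * (φ⌋x) := by
  induction x using CliffordAlgebra.left_induction with
  | algebraMap r => simp
  | add x y hx hy => rw [map_add, hx, hy, map_add, mul_add, add_sub_add_comm]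
  | ι_mul x v hx =>
    change ExteriorAlgebra.map _ (ι R v * x) = ι R v * x - ι R u * (φ⌋(ι R v * x))
    have hsq : ι R u * (ι R u * (φ⌋x)) = 0 := by
      rw [← mul_assoc, ι_sq_zero, zero_mul]
    have hswap : ι R u * (ι R v * (φ⌋x)) = -(ι R v * (ι R u * (φ⌋x))) := by
      rw [← mul_assoc, ← mul_assoc, eq_neg_of_add_eq_zero_left (ι_add_mul_swap u v), neg_mul]
    calc
      ExteriorAlgebra.map (LinearMap.id - φ.smulRight u) (ι R v * x) =
          (ι R v - φ v • ι R u) * (x - ι R u * (φ⌋x)) := by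
        simp [hx]
      _ = ι R v * x - ι R u * (φ v • x - ι R v * (φ⌋x)) := by
        simp only [mul_sub, sub_mul, smul_mul_assoc, mul_smul_comm, hsq, hswap, smul_zero]
        abel
      _ = ι R v * x - ι R u * (φ⌋(ι R v * x)) := by
        rw [CliffordAlgebra.contractLeft_ι_mul]

theorem contractLeft_ιMulti (φ : Dual R M) {n : ℕ} (v : Fin (n + 1) → M) :
    φ⌋(ιMulti R (n + 1) v) =
      ∑ j : Fin (n + 1), (-1 : R) ^ (j : ℕ) • φ (v j) • ιMulti R n (j.removeNth v) := by
  induction n with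
  | zero => simp [ιMulti_succ_apply, Algebra.algebraMap_eq_smul_one]
  | succ n ih =>
    have ιMulti_removeNth_succ (j : Fin (n + 1)) : ιMulti R (n + 1) (j.succ.removeNth v) =
        ι R (v 0) * ιMulti R n (j.removeNth (Matrix.vecTail v)) := by
      have vecTail_removeNth :
          Matrix.vecTail (j.succ.removeNth v) = j.removeNth (Matrix.vecTail v) := by
        ext k
        simp [Matrix.vecTail, Fin.removeNth]
      rw [ιMulti_succ_apply, vecTail_removeNth, Fin.removeNth_apply, Fin.succ_succAbove_zero]
    calc
      φ⌋(ιMulti R (n + 2) v) =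
          φ (v 0) • ιMulti R (n + 1) (Matrix.vecTail v) -
            ι R (v 0) * (φ⌋(ιMulti R (n + 1) (Matrix.vecTail v))) := by
        rw [ιMulti_succ_apply, CliffordAlgebra.contractLeft_ι_mul]
      _ = φ (v 0) • ιMulti R (n + 1) (Matrix.vecTail v) +
          ∑ j : Fin (n + 1), (-1 : R) ^ (j.succ : ℕ) • φ (v j.succ) •
            ιMulti R (n + 1) (j.succ.removeNth v) := by
        simp only [ih, ιMulti_removeNth_succ, Finset.mul_sum, mul_smul_comm, Fin.val_succ,
          pow_succ', neg_mul, one_mul, neg_smul, Finset.sum_neg_distrib, sub_eq_add_neg]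
        rfl
      _ = ∑ j : Fin (n + 2), (-1 : R) ^ (j : ℕ) • φ (v j) • ιMulti R (n + 1) (j.removeNth v) := by
        rw [Fin.sum_univ_succ (n := n + 1), Fin.val_zero, pow_zero, one_smul,
          Fin.removeNth_zero]
        rfl

theorem mem_map_ι_inf_ker_pow {φ : Dual R M} {U : Submodule R M} {u : M} (hu : u ∈ U)
    (hφu : φ u = 1) {n : ℕ} {x : ExteriorAlgebra R M} (hx : x ∈ U.map (ι R) ^ n)
    (hφx : φ⌋x = 0) : x ∈ (U ⊓ LinearMap.ker φ).map (ι R) ^ n := by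
  set P : M →ₗ[R] M := LinearMap.id - φ.smulRight u
  have hP : U.map P ≤ U ⊓ LinearMap.ker φ := by
    rintro _ ⟨v, hv, rfl⟩
    exact ⟨U.sub_mem hv (U.smul_mem _ hu), by simp [P, hφu]⟩
  have hPx : map P x = x := by
    rw [map_id_sub_smulRight_apply, hφx, mul_zero, sub_zero]
  have hx' : map P x ∈ (U.map P).map (ι R) ^ n :=
    map_map_ι_pow P U n ▸ Submodule.mem_map_of_mem hx
  exact pow_le_pow_left' (Submodule.map_mono hP) n (hPx ▸ hx')

/-- `δ` is the contraction `⋀^(n+1) M → N ⊗ ⋀^n M` along `T : M → N`, the map `T_(n+1)` of the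
informal statement. It is a predicate, by the values of `δ` on pure wedges, because the theorem
takes `T_(n+1)` as given through this property. -/
def IsContraction (T : M →ₗ[R] N) {n : ℕ} (δ : ⋀[R]^(n + 1) M →ₗ[R] N ⊗[R] ⋀[R]^n M) : Prop :=
  ∀ v : Fin (n + 1) → M, δ (exteriorPower.ιMulti R (n + 1) v) =
    ∑ j : Fin (n + 1), (-1 : R) ^ (j : ℕ) • T (v j) ⊗ₜ[R] exteriorPower.ιMulti R n (j.removeNth v)

namespace IsContraction

variable {T : M →ₗ[R] N} {n : ℕ} {δ : ⋀[R]^(n + 1) M →ₗ[R] N ⊗[R] ⋀[R]^n M}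

theorem lid_rTensor_apply (hδ : IsContraction T δ) (ψ : Dual R N) (x : ⋀[R]^(n + 1) M) :
    (⋀[R]^n M).subtype (TensorProduct.lid R _ (ψ.rTensor _ (δ x))) =
      (ψ ∘ₗ T)⌋(x : ExteriorAlgebra R M) := by
  suffices h : (⋀[R]^n M).subtype ∘ₗ (TensorProduct.lid R _).toLinearMap ∘ₗ ψ.rTensor _ ∘ₗ δ =
      CliffordAlgebra.contractLeft (ψ ∘ₗ T) ∘ₗ (⋀[R]^(n + 1) M).subtype from
    LinearMap.congr_fun h x
  ext v
  simp [hδ v, contractLeft_ιMulti, -ιMulti_succ_apply]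

theorem map_ι_ker_pow_le (hδ : IsContraction T δ) :
    (LinearMap.ker T).map (ι R) ^ (n + 1) ≤ (LinearMap.ker δ).map (⋀[R]^(n + 1) M).subtype := by
  rw [← (LinearMap.ker T).range_subtype, ← map_exteriorPower,
    ← exteriorPower.ιMulti_span_fixedDegree, Submodule.map_span_le]
  rintro _ ⟨v, rfl⟩
  refine ⟨exteriorPower.ιMulti R (n + 1) ((LinearMap.ker T).subtype ∘ v), ?_,
    (map_apply_ιMulti _ v).symm⟩
  simp [hδ _]

end IsContraction

end CommRing

section Field

variable {K V W : Type*} [Field K] [AddCommGroup V] [Module K V] [AddCommGroup W] [Module K W]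

theorem mem_map_ι_pow_of_forall_contractLeft_eq_zero {N : Submodule K V} {n : ℕ}
    {x : ExteriorAlgebra K V} (hx : x ∈ ⋀[K]^n V) (hN : ∀ φ ∈ N.dualAnnihilator, φ⌋x = 0) :
    x ∈ N.map (ι K) ^ n := by
  obtain ⟨U, hU, hxU⟩ := exists_fg_mem_map_pow _ hx
  have : FiniteDimensional K U := .of_fg hU
  clear hU
  induction hd : finrank K U using Nat.strong_induction_on generalizing U with
  | _ d ih =>
    by_cases hUN : U ≤ N
    · exact pow_le_pow_left' (Submodule.map_mono hUN) n hxU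
    obtain ⟨u, hu, huN⟩ := SetLike.not_le_iff_exists.1 hUN
    obtain ⟨φ, hφu, hφN⟩ := Submodule.exists_le_ker_of_notMem huN
    have hlt : U ⊓ LinearMap.ker φ < U := inf_lt_left.2 fun h => hφu (h hu)
    have hφx : φ⌋x = 0 := hN φ ((Submodule.mem_dualAnnihilator φ).2 hφN)
    have hxφ : x ∈ (U ⊓ LinearMap.ker φ).map (ι K) ^ n :=
      mem_map_ι_inf_ker_pow (U.smul_mem (φ u)⁻¹ hu) (by simp [hφu]) hxU hφx
    exact ih _ (hd ▸ Submodule.finrank_lt_finrank_of_lt hlt) _ hxφ inferInstance rfl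

theorem IsContraction.map_subtype_ker {T : V →ₗ[K] W} {n : ℕ}
    {δ : ⋀[K]^(n + 1) V →ₗ[K] W ⊗[K] ⋀[K]^n V} (hδ : IsContraction T δ) :
    (LinearMap.ker δ).map (⋀[K]^(n + 1) V).subtype = (LinearMap.ker T).map (ι K) ^ (n + 1) := by
  refine le_antisymm ?_ hδ.map_ι_ker_pow_le
  rintro _ ⟨x, hx, rfl⟩
  refine mem_map_ι_pow_of_forall_contractLeft_eq_zero x.2 fun φ hφ => ?_
  rw [← LinearMap.range_dualMap_eq_dualAnnihilator_ker] at hφ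
  obtain ⟨ψ, rfl⟩ := hφ
  have hψ := hδ.lid_rTensor_apply ψ x
  rw [LinearMap.mem_ker.1 hx, map_zero, map_zero] at hψ
  exact hψ.symm

theorem finrank_map_exteriorPower [FiniteDimensional K V] {f : V →ₗ[K] W}
    (hf : Function.Injective f) (n : ℕ) :
    finrank K ((⋀[K]^n V).map (map f).toLinearMap) = (finrank K V).choose n := by
  rw [← exteriorPower.finrank_eq K n]
  exact (Submodule.equivMapOfInjective _
    (map_injective_field (LinearMap.ker_eq_bot.2 hf)) _).finrank_eq.symm

theorem stmt0_general {T : V →ₗ[K] W} {n : ℕ} {δ : ⋀[K]^(n + 1) V →ₗ[K] W ⊗[K] ⋀[K]^n V}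
    (hδ : IsContraction T δ) :
    (LinearMap.ker δ).map (⋀[K]^(n + 1) V).subtype =
        (⋀[K]^(n + 1) (LinearMap.ker T)).map (map (LinearMap.ker T).subtype).toLinearMap ∧
      (FiniteDimensional K V → finrank K (LinearMap.range δ) =
        (finrank K V).choose (n + 1) - (finrank K (LinearMap.ker T)).choose (n + 1)) := by
  have hker : (LinearMap.ker δ).map (⋀[K]^(n + 1) V).subtype =
      (⋀[K]^(n + 1) (LinearMap.ker T)).map (map (LinearMap.ker T).subtype).toLinearMap := by
    rw [hδ.map_subtype_ker, map_exteriorPower, Submodule.range_subtype]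
  refine ⟨hker, fun _ => ?_⟩
  have finrank_ker :
      finrank K (LinearMap.ker δ) = (finrank K (LinearMap.ker T)).choose (n + 1) := by
    rw [← Submodule.finrank_map_subtype_eq, hker,
      finrank_map_exteriorPower (LinearMap.ker T).subtype_injective]
  rw [← finrank_ker, ← exteriorPower.finrank_eq K (n + 1), ← δ.finrank_range_add_finrank_ker,
    Nat.add_sub_cancel]

end Field

end ContractLeft

/-- Let `V`, `W` be finite-dimensional real vector spaces, `T : V → W` a
linear map, and for `i = n + 1 ≥ 2` let `Ti : ⋀^i V → W ⊗ ⋀^{i-1} V` be the linear map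
satisfying `Ti (v₁ ∧ ⋯ ∧ vᵢ) = ∑ⱼ (-1)^(j-1) T(vⱼ) ⊗ (v₁ ∧ ⋯ ∧ v̂ⱼ ∧ ⋯ ∧ vᵢ)`.
Then the kernel of `Ti` equals the image of the canonical map `⋀^i (ker T) → ⋀^i V`
induced by the inclusion `ker T ↪ V`, and consequently the rank of `Ti` equals
`choose (dim V) i - choose (dim (ker T)) i`. -/
theorem stmt0 {V W : Type*} [AddCommGroup V] [Module ℝ V] [FiniteDimensional ℝ V]
    [AddCommGroup W] [Module ℝ W] [FiniteDimensional ℝ W]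
    (T : V →ₗ[ℝ] W) (n : ℕ) (hn : 1 ≤ n)
    (Ti : ↥(extPow (n + 1) V) →ₗ[ℝ] W ⊗[ℝ] ↥(extPow n V))
    (hTi : ∀ v : Fin (n + 1) → V,
      Ti ⟨ExteriorAlgebra.ιMulti ℝ (n + 1) v, ιMulti_mem_extPow (n + 1) v⟩ =
        ∑ j : Fin (n + 1), ((-1 : ℝ)) ^ (j : ℕ) •
          (T (v j) ⊗ₜ[ℝ]
            (⟨ExteriorAlgebra.ιMulti ℝ n (fun k => v (j.succAbove k)),
              ιMulti_mem_extPow n _⟩ : ↥(extPow n V)))) :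
    Submodule.map (extPow (n + 1) V).subtype (LinearMap.ker Ti) =
      Submodule.map (ExteriorAlgebra.map (LinearMap.ker T).subtype).toLinearMap
        (extPow (n + 1) ↥(LinearMap.ker T)) ∧
    Module.finrank ℝ ↥(LinearMap.range Ti) =
      Nat.choose (Module.finrank ℝ V) (n + 1) -
        Nat.choose (Module.finrank ℝ ↥(LinearMap.ker T)) (n + 1) :=
  have h := stmt0_general hTi
  ⟨h.1, h.2 inferInstance⟩
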